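/- Let n ≥ 1 and let Z be a nonempty proper subset of ℤⁿ. Let H_Z be a complex Hilbert space with orthonormal basis {e_m : m ∈ Z} and U_Z the unitary representation of 𝕋ⁿ on H_Z given by U_Z(w) e_m = ⟨w, m⟩ e_m. Then no POVM M on (𝕋ⁿ, ℬ(𝕋ⁿ)) acting on H_Z that is U_Z-covariant (U_Z(w) M(B) U_Z(w)* = M(w·B) for all w ∈ 𝕋ⁿ and Borel B) is projection valued. In particular (n = 1, Z = ℕ), a covariant phase observable is never a projection valued measure. -/

import Mathlib

open MeasureTheory Set

local notation "⟪" x ", " y "⟫" => @inner ℂ _ _ x y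

noncomputable instance : MeasurableSpace Circle := borel Circle
instance : BorelSpace Circle := ⟨rfl⟩

/-- A normalized positive operator valued measure (POVM). -/
structure POVM (Ω : Type*) [MeasurableSpace Ω] (H : Type*) [NormedAddCommGroup H]
    [InnerProductSpace ℂ H] [CompleteSpace H] where
  toFun : Set Ω → (H →L[ℂ] H)
  isPositive : ∀ B : Set Ω, MeasurableSet B → (toFun B).IsPositive
  normalized : toFun Set.univ = 1
  m_iUnion : ∀ B : ℕ → Set Ω, (∀ k, MeasurableSet (B k)) →
    Pairwise (Function.onFun Disjoint B) → ∀ φ ψ : H,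
      HasSum (fun k => ⟪φ, toFun (B k) ψ⟫) ⟪φ, toFun (⋃ k, B k) ψ⟫

/-- `ℓ²(ℕ)`. -/
noncomputable abbrev ell2 : Type := lp (fun _ : ℕ => ℂ) 2

/-- The character `⟨w, m⟩ = w₁^{m₁} ⋯ w_n^{m_n}` of the torus `𝕋ⁿ`. -/
noncomputable def torusChar {n : ℕ} (w : Fin n → Circle) (m : Fin n → ℤ) : ℂ :=
  ∏ i, (w i : ℂ) ^ (m i)

/-- Covariance of a POVM `M` on `𝕋ⁿ` acting on `H`:
`U_Z(w) M(B) U_Z(w)* = M(w·B)` for all `w ∈ 𝕋ⁿ`. -/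
def TorusCovariant {n : ℕ} {H : Type*} [NormedAddCommGroup H] [InnerProductSpace ℂ H]
    [CompleteSpace H] (U : (Fin n → Circle) → (H ≃ₗᵢ[ℂ] H))
    (M : POVM (Fin n → Circle) H) : Prop :=
  ∀ w : Fin n → Circle, ∀ B : Set (Fin n → Circle), MeasurableSet B →
    ∀ φ ψ : H,
      ⟪(U w φ : H), M.toFun ((fun z => w * z) '' B) (U w ψ)⟫ = ⟪φ, M.toFun B ψ⟫


section helpers

variable {Ω : Type*} [MeasurableSpace Ω] {H : Type*} [NormedAddCommGroup H]
    [InnerProductSpace ℂ H] [CompleteSpace H]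

lemma povm_empty (M : POVM Ω H) : M.toFun ∅ = 0 := by
  ext ψ
  refine ext_inner_left ℂ fun φ => ?_
  have h := (M.m_iUnion (fun _ => ∅) (fun _ => MeasurableSet.empty)
    (fun i j _ => by simp [Function.onFun]) φ ψ).summable
  rw [summable_const_iff] at h
  simpa using h

lemma povm_union (M : POVM Ω H) {A B : Set Ω} (hA : MeasurableSet A) (hB : MeasurableSet B)
    (hd : Disjoint A B) : M.toFun (A ∪ B) = M.toFun A + M.toFun B := by
  ext ψ
  refine ext_inner_left ℂ fun φ => ?_
  let S : ℕ → Set Ω := fun k => if k = 0 then A else if k = 1 then B else ∅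
  have hS : ⋃ k, S k = A ∪ B := by
    ext x
    simp only [mem_iUnion, mem_union, S]
    constructor
    · rintro ⟨k, hk⟩
      split_ifs at hk
      · exact Or.inl hk
      · exact Or.inr hk
      · exact hk.elim
    · rintro (h | h)
      · exact ⟨0, by simpa using h⟩
      · exact ⟨1, by simpa using h⟩
  have h := M.m_iUnion S (fun k => by
      simp only [S]; split_ifs
      · exact hA
      · exact hB
      · exact MeasurableSet.empty)
    (fun i j hij => by
      simp only [Function.onFun, S]
      split_ifs <;> first | omega | exact hd | exact hd.symm | simp) φ ψ
  have h2 : HasSum (fun k => ⟪φ, M.toFun (S k) ψ⟫)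
      (∑ k ∈ ({0, 1} : Finset ℕ), ⟪φ, M.toFun (S k) ψ⟫) := by
    apply hasSum_sum_of_ne_finset_zero
    intro k hk
    simp only [Finset.mem_insert, Finset.mem_singleton, not_or] at hk
    simp [S, hk.1, hk.2, povm_empty]
  have h3 := h.unique h2
  rw [hS] at h3
  rw [h3]
  simp [S, inner_add_right]

lemma povm_orth (M : POVM Ω H)
    (hP : ∀ B, MeasurableSet B → M.toFun B ∘L M.toFun B = M.toFun B ∧ IsSelfAdjoint (M.toFun B))
    {A B : Set Ω} (hA : MeasurableSet A) (hB : MeasurableSet B)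
    (hd : Disjoint A B) (φ : H) : ⟪M.toFun A φ, M.toFun B φ⟫ = 0 := by
  have h := (hP _ (hA.union hB)).1
  have a := (hP _ hA).1
  have b := (hP _ hB).1
  have sa := (hP _ hA).2
  rw [povm_union M hA hB hd] at h
  set P := M.toFun A
  set Q := M.toFun B
  change P * P = P at a
  change Q * Q = Q at b
  change (P + Q) * (P + Q) = P + Q at h
  have h1 : P * Q + Q * P = 0 := by
    have e : (P + Q) * (P + Q) = P * P + Q * Q + (P * Q + Q * P) := by noncomm_ring
    rw [e, a, b] at h
    simpa using h
  have h2 : P * Q + P * Q * P = 0 := by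
    have := congrArg (P * ·) h1
    simpa [mul_add, ← mul_assoc, a] using this
  have h3 : P * Q * P + Q * P = 0 := by
    have := congrArg (· * P) h1
    simpa [add_mul, mul_assoc, a] using this
  have h4 : P * Q = Q * P := by
    have e1 := eq_neg_of_add_eq_zero_left h2
    have e2 := eq_neg_of_add_eq_zero_right h3
    rw [e1, e2]
  rw [← h4] at h1
  have h5 : P * Q = 0 := by
    rw [← two_smul ℂ] at h1
    exact (smul_eq_zero.mp h1).resolve_left two_ne_zero
  rw [← ContinuousLinearMap.adjoint_inner_right, ContinuousLinearMap.isSelfAdjoint_iff'.mp sa]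
  have : P (Q φ) = (P * Q) φ := rfl
  rw [this, h5]; simp

/-- the `ℂ`-valued set function used for integration -/
noncomputable def povmT (M : POVM Ω H) (φ : H) (s : Set Ω) : ℂ →L[ℝ] H :=
  (ContinuousLinearMap.toSpanSingleton ℂ (M.toFun s φ)).restrictScalars ℝ

lemma povmT_apply (M : POVM Ω H) (φ : H) (s : Set Ω) (z : ℂ) :
    povmT M φ s z = z • M.toFun s φ := by
  simp [povmT]

lemma povmT_add (M : POVM Ω H) (φ : H) : FinMeasAdditive (0 : Measure Ω) (povmT M φ) := by
  intro s t hs ht _ _ hd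
  ext z
  simp [povmT_apply, povm_union M hs ht hd]

/-- integration of simple functions -/
noncomputable def povmI (M : POVM Ω H) (φ : H) (f : SimpleFunc Ω ℂ) : H :=
  SimpleFunc.setToSimpleFunc (povmT M φ) f

lemma povmI_eq (M : POVM Ω H) (φ : H) (f : SimpleFunc Ω ℂ) :
    povmI M φ f = ∑ y ∈ f.range, y • M.toFun (f ⁻¹' {y}) φ := by
  simp [povmI, SimpleFunc.setToSimpleFunc, povmT_apply]

lemma povmI_sub (M : POVM Ω H) (φ : H) (f g : SimpleFunc Ω ℂ) :
    povmI M φ (f - g) = povmI M φ f - povmI M φ g :=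
  SimpleFunc.setToSimpleFunc_sub _ (povmT_add M φ) (by simp) (by simp)

lemma povmI_smul (M : POVM Ω H) (φ : H) (c : ℂ) (f : SimpleFunc Ω ℂ) :
    povmI M φ (c • f) = c • povmI M φ f :=
  SimpleFunc.setToSimpleFunc_smul _ (povmT_add M φ)
    (fun c s x => by simp [povmT_apply, mul_smul]) c (by simp)

lemma povm_sum (M : POVM Ω H) (φ : H) (f : SimpleFunc Ω ℂ) :
    ∑ y ∈ f.range, M.toFun (f ⁻¹' {y}) φ = φ := by
  have h := FinMeasAdditive.map_iUnion_fin_meas_set_eq_sum (povmT M φ)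
    (by ext; simp [povmT_apply, povm_empty]) (povmT_add M φ) (fun y => f ⁻¹' {y}) f.range
    (fun y => f.measurableSet_fiber y) (by simp)
    (fun i _ j _ hij => (Set.disjoint_singleton.mpr hij).preimage f)
  have hu : ⋃ y ∈ f.range, f ⁻¹' {y} = univ := by
    ext x; simp
  rw [hu] at h
  have := congrArg (fun L => L 1) h
  simpa [povmT_apply, M.normalized] using this.symm

lemma povmI_norm (M : POVM Ω H)
    (hP : ∀ B, MeasurableSet B → M.toFun B ∘L M.toFun B = M.toFun B ∧ IsSelfAdjoint (M.toFun B))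
    (φ : H) (f : SimpleFunc Ω ℂ) (c : ℂ → ℂ) :
    ‖∑ y ∈ f.range, c y • M.toFun (f ⁻¹' {y}) φ‖ ^ 2 =
      ∑ y ∈ f.range, ‖c y‖ ^ 2 * ‖M.toFun (f ⁻¹' {y}) φ‖ ^ 2 := by
  have key : ∀ y ∈ f.range, ⟪c y • M.toFun (f ⁻¹' {y}) φ,
      ∑ z ∈ f.range, c z • M.toFun (f ⁻¹' {z}) φ⟫ =
      ((‖c y‖ ^ 2 * ‖M.toFun (f ⁻¹' {y}) φ‖ ^ 2 : ℝ) : ℂ) := by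
    intro y hy
    rw [inner_sum, Finset.sum_eq_single y]
    · rw [inner_self_eq_norm_sq_to_K, norm_smul]; push_cast; ring_nf; rfl
    · intro z _ hz
      rw [inner_smul_left, inner_smul_right, povm_orth M hP (f.measurableSet_fiber y)
        (f.measurableSet_fiber z) ((Set.disjoint_singleton.mpr hz.symm).preimage f)]
      simp
    · exact fun h => (h hy).elim
  have h := inner_self_eq_norm_sq_to_K (𝕜 := ℂ) (∑ y ∈ f.range, c y • M.toFun (f ⁻¹' {y}) φ)
  rw [sum_inner, Finset.sum_congr rfl key] at h
  have h' : (((∑ y ∈ f.range, ‖c y‖ ^ 2 * ‖M.toFun (f ⁻¹' {y}) φ‖ ^ 2 : ℝ)) : ℂ) =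
    ((‖∑ y ∈ f.range, c y • M.toFun (f ⁻¹' {y}) φ‖ ^ 2 : ℝ) : ℂ) := by
    push_cast at h ⊢
    exact h
  exact (Complex.ofReal_injective h').symm

lemma povm_sum_norm (M : POVM Ω H)
    (hP : ∀ B, MeasurableSet B → M.toFun B ∘L M.toFun B = M.toFun B ∧ IsSelfAdjoint (M.toFun B))
    (φ : H) (f : SimpleFunc Ω ℂ) :
    ∑ y ∈ f.range, ‖M.toFun (f ⁻¹' {y}) φ‖ ^ 2 = ‖φ‖ ^ 2 := by
  have h := povmI_norm M hP φ f (fun _ => 1)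
  simp only [one_smul, povm_sum, norm_one, one_pow, one_mul] at h
  exact h.symm

lemma povmI_le (M : POVM Ω H)
    (hP : ∀ B, MeasurableSet B → M.toFun B ∘L M.toFun B = M.toFun B ∧ IsSelfAdjoint (M.toFun B))
    (φ : H) (hφ : ‖φ‖ = 1) (f : SimpleFunc Ω ℂ) (ε : ℝ) (hε : 0 ≤ ε) (hf : ∀ x, ‖f x‖ ≤ ε) :
    ‖povmI M φ f‖ ≤ ε := by
  refine (pow_le_pow_iff_left₀ (by positivity) (by positivity) two_ne_zero).mp ?_
  rw [povmI_eq, povmI_norm M hP φ f (fun y => y)]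
  calc _ ≤ ∑ y ∈ f.range, ε ^ 2 * ‖M.toFun (f ⁻¹' {y}) φ‖ ^ 2 := by
        refine Finset.sum_le_sum fun y hy => ?_
        obtain ⟨x, rfl⟩ := SimpleFunc.mem_range.mp hy
        have := hf x
        gcongr
    _ = ε ^ 2 := by rw [← Finset.mul_sum, povm_sum_norm M hP, hφ]; ring

lemma povmI_ge (M : POVM Ω H)
    (hP : ∀ B, MeasurableSet B → M.toFun B ∘L M.toFun B = M.toFun B ∧ IsSelfAdjoint (M.toFun B))
    (φ : H) (hφ : ‖φ‖ = 1) (f : SimpleFunc Ω ℂ) (ε : ℝ) (hε : 0 ≤ ε) (hf : ∀ x, ε ≤ ‖f x‖) :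
    ε ≤ ‖povmI M φ f‖ := by
  refine (pow_le_pow_iff_left₀ (by positivity) (by positivity) two_ne_zero).mp ?_
  rw [povmI_eq, povmI_norm M hP φ f (fun y => y)]
  calc ε ^ 2 = ∑ y ∈ f.range, ε ^ 2 * ‖M.toFun (f ⁻¹' {y}) φ‖ ^ 2 := by
        rw [← Finset.mul_sum, povm_sum_norm M hP, hφ]; ring
    _ ≤ _ := by
        refine Finset.sum_le_sum fun y hy => ?_
        obtain ⟨x, rfl⟩ := SimpleFunc.mem_range.mp hy
        have := hf x
        gcongr

lemma exists_simple_approx (g : Ω → ℂ) (hg : Measurable g) (h1 : ∀ x, ‖g x‖ = 1) (ε : ℝ)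
    (hε : 0 < ε) : ∃ f : SimpleFunc Ω ℂ, ∀ x, ‖f x - g x‖ ≤ ε := by
  let e := TopologicalSpace.denseSeq ℂ
  obtain ⟨N, hN⟩ := (isCompact_sphere (0 : ℂ) 1).elim_directed_cover
    (fun N : ℕ => ⋃ k ≤ N, Metric.ball (e k) ε)
    (fun N => isOpen_biUnion fun _ _ => Metric.isOpen_ball)
    (fun x _ => by
      obtain ⟨k, hk⟩ := (TopologicalSpace.denseRange_denseSeq ℂ).exists_dist_lt x hε
      simp only [mem_iUnion]
      exact ⟨k, k, le_rfl, hk⟩)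
    (directed_of_isDirected_le fun a b h => biUnion_subset_biUnion_left fun _ hx => le_trans hx h)
  refine ⟨(SimpleFunc.nearestPt e N).comp g hg, fun x => ?_⟩
  have hx := hN (show g x ∈ Metric.sphere (0 : ℂ) 1 by simp [h1])
  simp only [mem_iUnion] at hx
  obtain ⟨k, hk, hkx⟩ := hx
  have := SimpleFunc.edist_nearestPt_le e (g x) hk
  rw [edist_dist, edist_dist, ENNReal.ofReal_le_ofReal_iff dist_nonneg] at this
  rw [← dist_eq_norm]
  refine le_trans this ?_
  rw [dist_comm]
  exact (Metric.mem_ball.mp hkx).le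

end helpers

section torus

lemma torusChar_norm {n : ℕ} (w : Fin n → Circle) (m : Fin n → ℤ) : ‖torusChar w m‖ = 1 := by
  simp [torusChar, Circle.norm_coe]

lemma torusChar_mul {n : ℕ} (w z : Fin n → Circle) (m : Fin n → ℤ) :
    torusChar (w * z) m = torusChar w m * torusChar z m := by
  simp [torusChar, mul_zpow, Finset.prod_mul_distrib]

lemma torusChar_sub {n : ℕ} (w : Fin n → Circle) (m k : Fin n → ℤ) :
    torusChar w (m - k) = torusChar w m * (torusChar w k)⁻¹ := by
  simp only [torusChar, Pi.sub_apply, ← Finset.prod_inv_distrib, ← Finset.prod_mul_distrib]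
  refine Finset.prod_congr rfl fun i _ => ?_
  rw [zpow_sub₀ (Circle.coe_ne_zero _), div_eq_mul_inv]

lemma torusChar_inv {n : ℕ} (w : Fin n → Circle) (m : Fin n → ℤ) :
    torusChar w⁻¹ m = (torusChar w m)⁻¹ := by
  simp [torusChar]

lemma torusChar_measurable {n : ℕ} (m : Fin n → ℤ) :
    Measurable (fun w : Fin n → Circle => torusChar w m) := by
  have : Continuous (fun w : Fin n → Circle => torusChar w m) := by
    unfold torusChar
    refine continuous_finsetProd _ fun i _ => ?_
    refine Continuous.zpow₀ (by fun_prop) _ fun w => Or.inl (Circle.coe_ne_zero _)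
  exact this.measurable

lemma torusChar_sep {n : ℕ} (m p : Fin n → ℤ) (h : m ≠ p) :
    ∃ w, torusChar w m ≠ torusChar w p := by
  obtain ⟨i, hi⟩ := Function.ne_iff.mp h
  have hd : ((m i - p i : ℤ) : ℝ) ≠ 0 := by exact_mod_cast sub_ne_zero.mpr hi
  refine ⟨Function.update 1 i (Circle.exp (Real.pi / ((m i - p i : ℤ) : ℝ))), fun he => ?_⟩
  have hn : ∀ q : Fin n → ℤ, torusChar (Function.update (1 : Fin n → Circle) i
      (Circle.exp (Real.pi / ((m i - p i : ℤ) : ℝ)))) q =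
      (Circle.exp (Real.pi / ((m i - p i : ℤ) : ℝ)) : ℂ) ^ (q i) := by
    intro q
    unfold torusChar
    rw [Finset.prod_eq_single i]
    · simp
    · intro j _ hj; simp [hj]
    · simp
  rw [hn, hn] at he
  have h2 : (Circle.exp (Real.pi / ((m i - p i : ℤ) : ℝ)) : ℂ) ^ (m i - p i) = 1 := by
    rw [zpow_sub₀ (Circle.coe_ne_zero _), he]
    exact div_self (zpow_ne_zero _ (Circle.coe_ne_zero _))
  rw [Circle.coe_exp, ← Complex.exp_int_mul] at h2
  have h3 : ((m i - p i : ℤ) : ℂ) * (((Real.pi / ((m i - p i : ℤ) : ℝ) : ℝ) : ℂ) * Complex.I) =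
      Real.pi * Complex.I := by
    have : ((m i - p i : ℤ) : ℂ) ≠ 0 := by exact_mod_cast sub_ne_zero.mpr hi
    rw [Complex.ofReal_div, Complex.ofReal_intCast]
    field_simp
  rw [h3, Complex.exp_pi_mul_I] at h2
  norm_num at h2

lemma povmI_translate {n : ℕ} {H : Type*} [NormedAddCommGroup H] [InnerProductSpace ℂ H]
    [CompleteSpace H] (U : (Fin n → Circle) → (H ≃ₗᵢ[ℂ] H))
    (M : POVM (Fin n → Circle) H) (hM : TorusCovariant U M) (w : Fin n → Circle) (φ : H)
    (c : ℂ) (hφ : U w φ = c • φ) (f : SimpleFunc (Fin n → Circle) ℂ)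
    (hm : Measurable (fun z : Fin n → Circle => w⁻¹ * z)) :
    U w (povmI M φ f) = c • povmI M φ (f.comp (fun z => w⁻¹ * z) hm) := by
  have h1 : ∀ B, MeasurableSet B →
      U w (M.toFun B φ) = c • M.toFun ((fun z => w * z) '' B) φ := by
    intro B hB
    refine ext_inner_left ℂ fun ψ => ?_
    obtain ⟨ψ, rfl⟩ := (U w).surjective ψ
    have := hM w B hB ψ φ
    rw [hφ, map_smul] at this
    rw [this, (U w).inner_map_map]
  have hr : (f.comp (fun z => w⁻¹ * z) hm).range = f.range := by
    ext y
    simp only [SimpleFunc.mem_range, SimpleFunc.coe_comp, mem_range, Function.comp]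
    constructor
    · rintro ⟨x, rfl⟩; exact ⟨_, rfl⟩
    · rintro ⟨x, rfl⟩; exact ⟨w * x, by simp⟩
  rw [povmI_eq, povmI_eq, hr, map_sum, Finset.smul_sum]
  refine Finset.sum_congr rfl fun y _ => ?_
  rw [map_smul, h1 _ (f.measurableSet_fiber y), smul_comm]
  congr 4
  ext z
  simp only [mem_image, SimpleFunc.coe_comp, mem_preimage, Function.comp]
  constructor
  · rintro ⟨x, hx, rfl⟩; simpa using hx
  · intro h; exact ⟨w⁻¹ * z, h, by simp⟩

end torus

theorem stmt10 (n : ℕ) (hn : 1 ≤ n) (Z : Set (Fin n → ℤ)) (hZne : Z.Nonempty)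
    (hZproper : Z ≠ Set.univ)
    (H : Type*) [NormedAddCommGroup H] [InnerProductSpace ℂ H] [CompleteSpace H]
    (b : HilbertBasis Z ℂ H)
    (U : (Fin n → Circle) → (H ≃ₗᵢ[ℂ] H))
    (hU : ∀ w : Fin n → Circle, ∀ m : Z, U w (b m) = torusChar w (m : Fin n → ℤ) • b m)
    (M : POVM (Fin n → Circle) H)
    (hMcov : TorusCovariant U M) :
    -- `M` is not projection valued
    ¬ (∀ B : Set (Fin n → Circle), MeasurableSet B →
        M.toFun B ∘L M.toFun B = M.toFun B ∧ IsSelfAdjoint (M.toFun B)) := by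
  intro hP
  obtain ⟨m, hm⟩ := hZne
  obtain ⟨p, hp⟩ := (Set.ne_univ_iff_exists_notMem _).mp hZproper
  set φ : H := b ⟨m, hm⟩ with hφdef
  have hφ : ‖φ‖ = 1 := b.orthonormal.1 _
  let g : (Fin n → Circle) → ℂ := fun z => torusChar z (m - p)
  have happ : ∀ j : ℕ, ∃ f : SimpleFunc (Fin n → Circle) ℂ, ∀ x, ‖f x - g x‖ ≤ (1 / 2) ^ (j + 1) :=
    fun j => exists_simple_approx g (torusChar_measurable _) (fun x => torusChar_norm _ _) _
      (by positivity)
  choose f hf using happ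
  have hcau : CauchySeq (fun j => povmI M φ (f j)) := by
    refine cauchySeq_of_le_geometric (1 / 2) 1 (by norm_num) fun j => ?_
    rw [dist_eq_norm, ← povmI_sub]
    refine povmI_le M hP φ hφ _ _ (by positivity) fun x => ?_
    have e : (f j - f (j + 1)) x = (f j x - g x) - (f (j + 1) x - g x) := by simp
    rw [e]
    refine (norm_sub_le _ _).trans ?_
    have h1 := hf j x
    have h2 := hf (j + 1) x
    have h3 : (0 : ℝ) < (1 / 2) ^ j := by positivity
    simp only [pow_succ] at h1 h2
    linarith
  obtain ⟨v, hv⟩ := cauchySeq_tendsto_of_complete hcau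
  have hv1 : (1 / 2 : ℝ) ≤ ‖v‖ := by
    refine ge_of_tendsto' hv.norm fun j => ?_
    refine povmI_ge M hP φ hφ _ _ (by norm_num) fun x => ?_
    have h1 := hf j x
    have h2 : ‖g x‖ = 1 := torusChar_norm _ _
    have h3 := norm_sub_norm_le (g x) (f j x)
    rw [norm_sub_rev] at h3
    have h4 : ((1 : ℝ) / 2) ^ (j + 1) ≤ 1 / 2 := by
      rw [pow_succ]
      have : ((1 : ℝ) / 2) ^ j ≤ 1 := pow_le_one₀ (by norm_num) (by norm_num)
      linarith
    linarith
  have heig : ∀ w, U w v = torusChar w p • v := by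
    intro w
    have hmeas : Measurable (fun z : Fin n → Circle => w⁻¹ * z) :=
      (continuous_const.mul continuous_id).measurable
    have ht : Filter.Tendsto (fun j => U w (povmI M φ (f j)) - torusChar w p • povmI M φ (f j))
        Filter.atTop (nhds (U w v - torusChar w p • v)) :=
      (((U w).continuous.tendsto v).comp hv).sub (hv.const_smul _)
    have h0 : Filter.Tendsto (fun j => U w (povmI M φ (f j)) - torusChar w p • povmI M φ (f j))
        Filter.atTop (nhds 0) := by
      refine squeeze_zero_norm (a := fun j : ℕ => ((1 : ℝ) / 2) ^ j) (fun j => ?_)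
        (tendsto_pow_atTop_nhds_zero_of_lt_one (by norm_num) (by norm_num))
      rw [povmI_translate U M hMcov w φ (torusChar w m) (hU w ⟨m, hm⟩) (f j) hmeas]
      have hpm : torusChar w p = torusChar w m * (torusChar w (m - p))⁻¹ := by
        rw [← torusChar_sub]; congr 1; abel
      rw [hpm, mul_smul, ← smul_sub, ← povmI_smul, ← povmI_sub, norm_smul, torusChar_norm, one_mul]
      refine povmI_le M hP φ hφ _ _ (by positivity) fun x => ?_
      have hg : g (w⁻¹ * x) = (torusChar w (m - p))⁻¹ * g x := by
        simp only [g, torusChar_mul, torusChar_inv]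
      have e : ((f j).comp (fun z => w⁻¹ * z) hmeas - (torusChar w (m - p))⁻¹ • f j) x =
          (f j (w⁻¹ * x) - g (w⁻¹ * x)) - (torusChar w (m - p))⁻¹ * (f j x - g x) := by
        rw [hg]
        simp
        ring
      rw [e]
      refine (norm_sub_le _ _).trans ?_
      rw [norm_mul, norm_inv, torusChar_norm, inv_one, one_mul]
      have h1 := hf j x
      have h2 := hf j (w⁻¹ * x)
      simp only [pow_succ] at h1 h2
      linarith
    exact sub_eq_zero.mp (tendsto_nhds_unique ht h0)
  have hv0 : v = 0 := by
    apply b.repr.injective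
    rw [map_zero]
    ext q
    rw [b.repr_apply_apply]
    have hqp : (q : Fin n → ℤ) ≠ p := fun h => hp (h ▸ q.2)
    obtain ⟨w, hw⟩ := torusChar_sep _ _ hqp
    have h1 := (U w).inner_map_map (b q) v
    rw [hU, heig, inner_smul_left, inner_smul_right] at h1
    by_contra hne
    change ⟪b q, v⟫ ≠ 0 at hne
    rw [← mul_assoc] at h1
    have h2 : (starRingEnd ℂ) (torusChar w q) * torusChar w p = 1 :=
      mul_right_cancel₀ hne (by rw [h1, one_mul])
    have h3 : torusChar w q * (starRingEnd ℂ) (torusChar w q) = 1 := by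
      rw [Complex.mul_conj, Complex.normSq_eq_norm_sq, torusChar_norm]; simp
    apply hw
    calc torusChar w q = torusChar w q * ((starRingEnd ℂ) (torusChar w q) * torusChar w p) := by
          rw [h2, mul_one]
      _ = torusChar w p := by rw [← mul_assoc, h3, one_mul]
  rw [hv0] at hv1
  norm_num at hv1
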